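/- Assume σ > 0 and ρ0⁺ > ρ0⁻, and let 0 < a < b < g(ρ0⁺ − ρ0⁻)/σ. For each frequency k > 0 and s > 0 let E_k(φ,ψ;s), J(φ,ψ) and μ_k(s) be the corresponding energies and infimum. Then there exist constants C₀, C₁ > 0, depending only on m, ℓ, g, σ, a, b and the profiles ρ0, p, ε0, δ0, such that μ_k(s) ≤ −C₀ + s·C₁ for every k with a ≤ k² ≤ b and every s > 0. -/

import Mathlib

open Set MeasureTheory intervalIntegral Filter Topology

noncomputable section

namespace RT

/-- The piecewise integral `∫_{-m}^0 + ∫_0^ℓ`. -/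
def pwInt (m l : ℝ) (f : ℝ → ℝ) : ℝ :=
  (∫ x in (-m)..(0:ℝ), f x) + ∫ x in (0:ℝ)..l, f x

/-- `f` restricted to `[-m,0)` extends continuously to `[-m,0]`, and `f` restricted to
`(0,ℓ]` extends continuously to `[0,ℓ]`. -/
def PiecewiseCont (m l : ℝ) (f : ℝ → ℝ) : Prop :=
  (∃ F : ℝ → ℝ, ContinuousOn F (Icc (-m) 0) ∧ EqOn f F (Ico (-m) 0)) ∧
  (∃ F : ℝ → ℝ, ContinuousOn F (Icc 0 l) ∧ EqOn f F (Ioc 0 l))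

/-- A profile function: the restriction to `[-m,0)` extends continuously to `[-m,0]`, and
the function is continuous on `[0,ℓ]` (hence right-continuous at `0`). -/
def Profile (m l : ℝ) (f : ℝ → ℝ) : Prop :=
  (∃ F : ℝ → ℝ, ContinuousOn F (Icc (-m) 0) ∧ EqOn f F (Ico (-m) 0)) ∧
  ContinuousOn f (Icc 0 l)

/-- The four steady-state profiles `ρ0, p, ε0, δ0` with their positivity assumptions. -/
def ProfilesHyp (m l : ℝ) (ρ0 p ε0 δ0 : ℝ → ℝ) : Prop :=
  Profile m l ρ0 ∧ Profile m l p ∧ Profile m l ε0 ∧ Profile m l δ0 ∧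
  (∀ x ∈ Icc (-m) l, 0 < ρ0 x) ∧ (∀ x ∈ Icc (-m) l, 0 < p x) ∧
  (∀ x ∈ Icc (-m) l, 0 < ε0 x) ∧ (∀ x ∈ Icc (-m) l, 0 ≤ δ0 x)

/-- `f` is continuous on `[-m,ℓ]` and continuously differentiable on `[-m,0]` and on
`[0,ℓ]`, with piecewise derivative `fd`. -/
def PiecewiseC1 (m l : ℝ) (f fd : ℝ → ℝ) : Prop :=
  ContinuousOn f (Icc (-m) l) ∧
  (∀ x ∈ Ico (-m) 0, HasDerivWithinAt f (fd x) (Icc (-m) 0) x) ∧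
  (∀ x ∈ Ioc 0 l, HasDerivWithinAt f (fd x) (Icc 0 l) x) ∧
  PiecewiseCont m l fd

/-- An admissible pair `(φ,ψ)` with piecewise derivatives `(φd,ψd)`. -/
def Admissible (m l : ℝ) (φ ψ φd ψd : ℝ → ℝ) : Prop :=
  PiecewiseC1 m l φ φd ∧ PiecewiseC1 m l ψ ψd ∧
  φ (-m) = 0 ∧ φ l = 0 ∧ ψ (-m) = 0 ∧ ψ l = 0

/-- The energy `E(φ,ψ;s)`. -/
def energyE (m l g σ k : ℝ) (ρ0 p ε0 δ0 : ℝ → ℝ) (φ ψ φd ψd : ℝ → ℝ) (s : ℝ) : ℝ :=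
  σ * k ^ 2 / 2 * (ψ 0) ^ 2
  + (1 / 2) * pwInt m l (fun x =>
      (s * δ0 x + p x * ρ0 x) * (ψd x + k * φ x) ^ 2 - 2 * g * ρ0 x * k * φ x * ψ x)
  + (s / 2) * pwInt m l (fun x =>
      ε0 x * ((φd x - k * ψ x) ^ 2 + (ψd x - k * φ x) ^ 2
        + (1 / 3) * (ψd x + k * φ x) ^ 2))

/-- The normalization functional `J(φ,ψ)`. -/
def energyJ (m l : ℝ) (ρ0 : ℝ → ℝ) (φ ψ : ℝ → ℝ) : ℝ :=
  (1 / 2) * pwInt m l (fun x => ρ0 x * ((φ x) ^ 2 + (ψ x) ^ 2))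

/-- The viscous part `E1(φ,ψ)` of the energy. -/
def energyE1 (m l k : ℝ) (ε0 δ0 : ℝ → ℝ) (φ ψ φd ψd : ℝ → ℝ) : ℝ :=
  (1 / 2) * pwInt m l (fun x => (δ0 x + ε0 x / 3) * (ψd x + k * φ x) ^ 2)
  + (1 / 2) * pwInt m l (fun x =>
      ε0 x * ((φd x - k * ψ x) ^ 2 + (ψd x - k * φ x) ^ 2))

/-- `μ(s)`: the infimum of `E(·,·;s)` over admissible pairs with `J = 1`. -/
def muInf (m l g σ k : ℝ) (ρ0 p ε0 δ0 : ℝ → ℝ) (s : ℝ) : ℝ :=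
  sInf { e : ℝ | ∃ φ ψ φd ψd : ℝ → ℝ, Admissible m l φ ψ φd ψd ∧
    energyJ m l ρ0 φ ψ = 1 ∧ e = energyE m l g σ k ρ0 p ε0 δ0 φ ψ φd ψd s }

/-- The hydrostatic steady-state relation `ρ0' = -g ρ0 / p` on each piece. -/
def Hydrostatic (m l g : ℝ) (ρ0 p : ℝ → ℝ) : Prop :=
  (∀ x ∈ Ico (-m) 0, HasDerivWithinAt ρ0 (-g * ρ0 x / p x) (Ico (-m) 0) x) ∧
  (∀ x ∈ Ioc 0 l, HasDerivWithinAt ρ0 (-g * ρ0 x / p x) (Ioc 0 l) x)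

end RT

namespace RT

lemma PiecewiseCont.binop {m l : ℝ} {f g : ℝ → ℝ} (op : ℝ → ℝ → ℝ)
    (hop : Continuous (fun q : ℝ × ℝ => op q.1 q.2))
    (hf : PiecewiseCont m l f) (hg : PiecewiseCont m l g) :
    PiecewiseCont m l (fun x => op (f x) (g x)) := by
  obtain ⟨⟨F, hF, hF2⟩, ⟨F', hF', hF2'⟩⟩ := hf
  obtain ⟨⟨G, hG, hG2⟩, ⟨G', hG', hG2'⟩⟩ := hg
  refine ⟨⟨fun x => op (F x) (G x), hop.comp_continuousOn (hF.prodMk hG), ?_⟩,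
    ⟨fun x => op (F' x) (G' x), hop.comp_continuousOn (hF'.prodMk hG'), ?_⟩⟩
  · intro x hx
    simp only [hF2 hx, hG2 hx]
  · intro x hx
    simp only [hF2' hx, hG2' hx]

lemma PiecewiseCont.mul {m l : ℝ} {f g : ℝ → ℝ}
    (hf : PiecewiseCont m l f) (hg : PiecewiseCont m l g) :
    PiecewiseCont m l (fun x => f x * g x) :=
  hf.binop (fun a b => a * b) (by fun_prop) hg

lemma PiecewiseCont.add {m l : ℝ} {f g : ℝ → ℝ}
    (hf : PiecewiseCont m l f) (hg : PiecewiseCont m l g) :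
    PiecewiseCont m l (fun x => f x + g x) :=
  hf.binop (fun a b => a + b) (by fun_prop) hg

lemma PiecewiseCont.sub {m l : ℝ} {f g : ℝ → ℝ}
    (hf : PiecewiseCont m l f) (hg : PiecewiseCont m l g) :
    PiecewiseCont m l (fun x => f x - g x) :=
  hf.binop (fun a b => a - b) (by fun_prop) hg

lemma PiecewiseCont.sq {m l : ℝ} {f : ℝ → ℝ}
    (hf : PiecewiseCont m l f) :
    PiecewiseCont m l (fun x => f x ^ 2) :=
  hf.binop (fun a _ => a ^ 2) (by fun_prop) hf

lemma pc_of_contOn {m l : ℝ} (hm : 0 < m) (hl : 0 < l) {f : ℝ → ℝ}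
    (hf : ContinuousOn f (Icc (-m) l)) : PiecewiseCont m l f :=
  ⟨⟨f, hf.mono (Icc_subset_Icc le_rfl hl.le), fun _ _ => rfl⟩,
   ⟨f, hf.mono (Icc_subset_Icc (by linarith) le_rfl), fun _ _ => rfl⟩⟩

lemma pc_const {m l : ℝ} (c : ℝ) : PiecewiseCont m l (fun _ => c) :=
  ⟨⟨fun _ => c, continuousOn_const, fun _ _ => rfl⟩,
   ⟨fun _ => c, continuousOn_const, fun _ _ => rfl⟩⟩

lemma pc_of_cont {m l : ℝ} {f : ℝ → ℝ}
    (hf : Continuous f) : PiecewiseCont m l f :=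
  ⟨⟨f, hf.continuousOn, fun _ _ => rfl⟩, ⟨f, hf.continuousOn, fun _ _ => rfl⟩⟩

lemma Profile.pc {m l : ℝ} {f : ℝ → ℝ} (hf : Profile m l f) : PiecewiseCont m l f :=
  ⟨hf.1, ⟨f, hf.2, fun _ _ => rfl⟩⟩

lemma PiecewiseCont.intL {m l : ℝ} (hm : 0 < m) {f : ℝ → ℝ}
    (hf : PiecewiseCont m l f) : IntervalIntegrable f volume (-m) 0 := by
  obtain ⟨⟨F, hF, hF2⟩, -⟩ := hf
  have h : IntervalIntegrable F volume (-m) 0 :=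
    ContinuousOn.intervalIntegrable_of_Icc (by linarith) hF
  rw [intervalIntegrable_iff_integrableOn_Ico_of_le (by linarith)] at h ⊢
  exact h.congr_fun (fun x hx => (hF2 hx).symm) measurableSet_Ico

lemma PiecewiseCont.intR {m l : ℝ} (hl : 0 < l) {f : ℝ → ℝ}
    (hf : PiecewiseCont m l f) : IntervalIntegrable f volume 0 l := by
  obtain ⟨-, ⟨F, hF, hF2⟩⟩ := hf
  have h : IntervalIntegrable F volume 0 l :=
    ContinuousOn.intervalIntegrable_of_Icc hl.le hF
  rw [intervalIntegrable_iff_integrableOn_Ioc_of_le hl.le] at h ⊢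
  exact h.congr_fun (fun x hx => (hF2 hx).symm) measurableSet_Ioc

lemma pwInt_mono {m l : ℝ} (hm : 0 < m) (hl : 0 < l) {f g : ℝ → ℝ}
    (hf : PiecewiseCont m l f) (hg : PiecewiseCont m l g)
    (h : ∀ x ∈ Icc (-m) l, f x ≤ g x) : pwInt m l f ≤ pwInt m l g := by
  unfold pwInt
  apply add_le_add
  · exact intervalIntegral.integral_mono_on (by linarith) (hf.intL hm) (hg.intL hm)
      (fun x hx => h x ⟨hx.1, by linarith [hx.2]⟩)
  · exact intervalIntegral.integral_mono_on hl.le (hf.intR hl) (hg.intR hl)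
      (fun x hx => h x ⟨by linarith [hx.1], hx.2⟩)

lemma pwInt_const_mul {m l : ℝ} (c : ℝ) (f : ℝ → ℝ) :
    pwInt m l (fun x => c * f x) = c * pwInt m l f := by
  unfold pwInt
  rw [intervalIntegral.integral_const_mul, intervalIntegral.integral_const_mul]
  ring

lemma pwInt_nonneg {m l : ℝ} (hm : 0 < m) (hl : 0 < l) {f : ℝ → ℝ}
    (h : ∀ x ∈ Icc (-m) l, 0 ≤ f x) : 0 ≤ pwInt m l f := by
  unfold pwInt
  apply add_nonneg
  · exact intervalIntegral.integral_nonneg (by linarith)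
      (fun x hx => h x ⟨hx.1, by linarith [hx.2]⟩)
  · exact intervalIntegral.integral_nonneg hl.le
      (fun x hx => h x ⟨by linarith [hx.1], hx.2⟩)

lemma hasDerivAt_max_pow (n : ℕ) (u : ℝ) :
    HasDerivAt (fun u : ℝ => max u 0 ^ (n + 2)) ((n + 2 : ℕ) * max u 0 ^ (n + 1)) u := by
  rcases lt_trichotomy u 0 with h | h | h
  · have h1 : (fun u : ℝ => max u 0 ^ (n + 2)) =ᶠ[𝓝 u] fun _ => 0 := by
      filter_upwards [gt_mem_nhds h] with y hy
      simp [max_eq_right (le_of_lt hy)]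
    rw [max_eq_right h.le]
    simpa using (hasDerivAt_const u (0:ℝ)).congr_of_eventuallyEq h1
  · subst h
    simp only [max_self, ne_eq, Nat.add_eq_zero_iff, one_ne_zero, and_false, not_false_eq_true,
      zero_pow, mul_zero]
    rw [hasDerivAt_iff_isLittleO]
    simp only [max_self, ne_eq, Nat.add_eq_zero_iff, OfNat.ofNat_ne_zero, and_false,
      not_false_eq_true, zero_pow, sub_zero, smul_eq_mul, mul_zero]
    have hp : (fun x : ℝ => x ^ (n + 2)) =o[𝓝 0] fun x => x := by
      simpa using Asymptotics.isLittleO_pow_pow (𝕜 := ℝ) (show 1 < n + 2 by omega)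
    refine Asymptotics.IsBigO.trans_isLittleO ?_ hp
    refine Asymptotics.IsBigO.of_bound 1 (Eventually.of_forall fun x => ?_)
    rw [norm_pow, norm_pow, one_mul]
    refine pow_le_pow_left₀ (norm_nonneg _) ?_ _
    rw [Real.norm_eq_abs, Real.norm_eq_abs, abs_of_nonneg (le_max_right _ _)]
    exact max_le (le_abs_self _) (abs_nonneg _)
  · have h1 : (fun u : ℝ => max u 0 ^ (n + 2)) =ᶠ[𝓝 u] fun u => u ^ (n + 2) := by
      filter_upwards [lt_mem_nhds h] with y hy
      rw [max_eq_left (le_of_lt hy)]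
    rw [max_eq_left h.le]
    exact (hasDerivAt_pow (n + 2) u).congr_of_eventuallyEq h1

lemma exists_bump {d : ℝ} (hd : 0 < d) : ∃ w w1 w2 : ℝ → ℝ,
    (∀ x, HasDerivAt w (w1 x) x) ∧ (∀ x, HasDerivAt w1 (w2 x) x) ∧ Continuous w2 ∧
    w 0 = 1 ∧ (∀ x, d ≤ |x| → w x = 0 ∧ w1 x = 0) ∧ (∀ x, 0 ≤ w x) ∧
    (∀ x ≤ 0, 0 ≤ w1 x) ∧ (∀ x, 0 ≤ x → w1 x ≤ 0) := by
  have hu : ∀ x : ℝ, HasDerivAt (fun x : ℝ => 1 - (x / d) ^ 2) (-(2 * x / d ^ 2)) x := by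
    intro x
    have := (((hasDerivAt_id x).div_const d).pow 2).const_sub 1
    refine HasDerivAt.congr_deriv this ?_
    simp
    field_simp
  have hlin : ∀ x : ℝ, HasDerivAt (fun x : ℝ => -(2 * x / d ^ 2)) (-(2 / d ^ 2)) x := by
    intro x
    have := ((((hasDerivAt_id x).const_mul 2)).div_const (d ^ 2)).neg
    refine HasDerivAt.congr_deriv this ?_
    simp
  refine ⟨fun x => max (1 - (x / d) ^ 2) 0 ^ 3,
    fun x => 3 * max (1 - (x / d) ^ 2) 0 ^ 2 * (-(2 * x / d ^ 2)),
    fun x => (3 * (2 * max (1 - (x / d) ^ 2) 0 ^ 1 * (-(2 * x / d ^ 2)))) * (-(2 * x / d ^ 2))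
      + 3 * max (1 - (x / d) ^ 2) 0 ^ 2 * (-(2 / d ^ 2)), ?_, ?_, ?_, ?_, ?_, ?_, ?_, ?_⟩
  · intro x
    have := (hasDerivAt_max_pow 1 (1 - (x / d) ^ 2)).comp x (hu x)
    simpa [Function.comp_def] using this
  · intro x
    have h2 := (hasDerivAt_max_pow 0 (1 - (x / d) ^ 2)).comp x (hu x)
    have h3 : HasDerivAt (fun x : ℝ => max (1 - (x / d) ^ 2) 0 ^ 2)
      (2 * max (1 - (x / d) ^ 2) 0 ^ 1 * (-(2 * x / d ^ 2))) x := by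
      simpa [Function.comp_def] using h2
    exact (h3.const_mul 3).mul (hlin x)
  · fun_prop
  · simp
  · intro x hx
    have h1 : 1 ≤ (x / d) ^ 2 := by
      rw [div_pow, le_div_iff₀ (by positivity), one_mul, ← sq_abs x]
      exact pow_le_pow_left₀ hd.le hx 2
    have : max (1 - (x / d) ^ 2) 0 = 0 := max_eq_right (by linarith)
    simp [this]
  · intro x
    have := le_max_right (1 - (x / d) ^ 2) 0
    positivity
  · intro x hx
    apply mul_nonneg (by positivity)
    rw [← neg_div]
    exact div_nonneg (by linarith) (by positivity)
  · intro x hx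
    apply mul_nonpos_of_nonneg_of_nonpos (by positivity)
    have : 0 ≤ 2 * x / d ^ 2 := by positivity
    linarith

lemma muInf_bddBelow (m l g σ k s : ℝ) (ρ0 p ε0 δ0 : ℝ → ℝ)
    (hm : 0 < m) (hl : 0 < l) (hg : 0 < g) (hσ : 0 < σ) (hk : 0 < k) (hs : 0 < s)
    (hprof : ProfilesHyp m l ρ0 p ε0 δ0) :
    BddBelow { e : ℝ | ∃ φ ψ φd ψd : ℝ → ℝ, Admissible m l φ ψ φd ψd ∧
    energyJ m l ρ0 φ ψ = 1 ∧ e = energyE m l g σ k ρ0 p ε0 δ0 φ ψ φd ψd s } := by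
  obtain ⟨pρ, pp, pε, pδ, hρ, hp, hε, hδ⟩ := hprof
  refine ⟨-(g * k), ?_⟩
  rintro e ⟨φ, ψ, φd, ψd, ⟨⟨cφ, -, -, cφd⟩, ⟨cψ, -, -, cψd⟩, -⟩, hJ, rfl⟩
  have cφ := pc_of_contOn hm hl cφ
  have cψ := pc_of_contOn hm hl cψ
  have h1 : pwInt m l (fun x => -(g * k) * (ρ0 x * ((φ x) ^ 2 + (ψ x) ^ 2))) ≤
      pwInt m l (fun x =>
      (s * δ0 x + p x * ρ0 x) * (ψd x + k * φ x) ^ 2 - 2 * g * ρ0 x * k * φ x * ψ x) := by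
    apply pwInt_mono hm hl
    · exact (pc_const _).mul (pρ.pc.mul (cφ.sq.add cψ.sq))
    · exact ((((pc_const s).mul pδ.pc).add (pp.pc.mul pρ.pc)).mul
        (cψd.add ((pc_const k).mul cφ)).sq).sub
        (((((pc_const (2 * g)).mul pρ.pc).mul (pc_const k)).mul cφ).mul cψ)
    · intro x hx
      have a1 := hρ x hx
      have a2 := hp x hx
      have a3 := hδ x hx
      have : 0 ≤ (s * δ0 x + p x * ρ0 x) * (ψd x + k * φ x) ^ 2 := by positivity
      have : 0 ≤ g * k * ρ0 x * (φ x - ψ x) ^ 2 := by positivity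
      nlinarith
  rw [pwInt_const_mul] at h1
  have h2 : 0 ≤ pwInt m l (fun x =>
      ε0 x * ((φd x - k * ψ x) ^ 2 + (ψd x - k * φ x) ^ 2
        + (1 / 3) * (ψd x + k * φ x) ^ 2)) := by
    apply pwInt_nonneg hm hl
    intro x hx
    have := hε x hx
    positivity
  unfold energyJ at hJ
  unfold energyE
  have h3 : 0 ≤ σ * k ^ 2 / 2 * (ψ 0) ^ 2 := by positivity
  have h4 := mul_nonneg (half_pos hs).le h2
  have h5 : g * k * pwInt m l (fun x => ρ0 x * ((φ x) ^ 2 + (ψ x) ^ 2)) = g * k * 2 := by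
    congr 1; linarith
  linarith

/-- Uniform negativity bound: if `σ > 0`, `ρ0⁺ > ρ0⁻` and `0 < a < b < g(ρ0⁺ - ρ0⁻)/σ`,
then there are constants `C₀, C₁ > 0` with `μ_k(s) ≤ -C₀ + s C₁` for every frequency `k`
with `a ≤ k² ≤ b` and every `s > 0`.  Here `ρ0⁺ = ρ0 0` and `ρ0⁻` is the left limit of
`ρ0` at `0`. -/
theorem muInf_uniform_negative_bound (m l g σ : ℝ) (ρ0 p ε0 δ0 : ℝ → ℝ) (ρ0minus : ℝ)
    (a b : ℝ)
    (hm : 0 < m) (hl : 0 < l) (hg : 0 < g) (hσ : 0 < σ)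
    (hprof : ProfilesHyp m l ρ0 p ε0 δ0)
    (hhydro : Hydrostatic m l g ρ0 p)
    (hρm : Tendsto ρ0 (𝓝[<] 0) (𝓝 ρ0minus))
    (hjump : ρ0minus < ρ0 0)
    (ha : 0 < a) (hab : a < b) (hb : b < g * (ρ0 0 - ρ0minus) / σ) :
    ∃ C₀ : ℝ, 0 < C₀ ∧ ∃ C₁ : ℝ, 0 < C₁ ∧
      ∀ k s : ℝ, 0 < k → 0 < s → a ≤ k ^ 2 → k ^ 2 ≤ b →
        muInf m l g σ k ρ0 p ε0 δ0 s ≤ -C₀ + s * C₁ := by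
  have hprof' := hprof
  obtain ⟨pρ, pp, pε, pδ, hρ, hp, hε, hδ⟩ := hprof
  set D : ℝ := g * (ρ0 0 - ρ0minus) - σ * b with hD
  have hDpos : 0 < D := by
    rw [lt_div_iff₀ hσ] at hb
    linarith
  set η : ℝ := D / (4 * g) with hη
  have hηpos : 0 < η := by positivity
  -- the scale of the bump
  obtain ⟨d, hd, hdm, hdl, hleft, hright⟩ : ∃ d : ℝ, 0 < d ∧ d ≤ m ∧ d ≤ l ∧
      (∀ x, -d < x → x < 0 → ρ0 x ≤ ρ0minus + η) ∧
      (∀ x, 0 ≤ x → x < d → ρ0 0 - η ≤ ρ0 x) := by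
    have e1 : ∀ᶠ x in 𝓝[<] (0:ℝ), ρ0 x < ρ0minus + η := hρm.eventually_lt_const (by linarith)
    obtain ⟨r, hr, hr2⟩ := (mem_nhdsLT_iff_exists_Ioo_subset).1 e1
    have c0 : ContinuousWithinAt ρ0 (Icc 0 l) 0 := pρ.2 0 ⟨le_rfl, hl.le⟩
    have e2 : ∀ᶠ x in 𝓝[Icc 0 l] (0:ℝ), ρ0 0 - η < ρ0 x :=
      c0.eventually_const_lt (by linarith)
    obtain ⟨t, ht, ht2⟩ := Metric.mem_nhdsWithin_iff.1 e2
    have hr' : r < 0 := hr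
    refine ⟨min (min m l) (min (-r) t), ?_, ?_, ?_, ?_, ?_⟩
    · simp only [lt_min_iff]
      exact ⟨⟨hm, hl⟩, by linarith, ht⟩
    · exact (min_le_left _ _).trans (min_le_left _ _)
    · exact (min_le_left _ _).trans (min_le_right _ _)
    · intro x hx hx0
      have : min (min m l) (min (-r) t) ≤ -r := (min_le_right _ _).trans (min_le_left _ _)
      exact (le_of_lt (hr2 (show x ∈ Ioo r 0 from ⟨by linarith, hx0⟩)))
    · intro x hx hxd
      simp only [lt_min_iff] at hxd
      refine le_of_lt (ht2 ⟨?_, hx, hxd.1.2.le⟩)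
      rw [Metric.mem_ball, Real.dist_eq, sub_zero, abs_of_nonneg hx]
      exact hxd.2.2
  obtain ⟨w, w1, w2, dw, dw1, cw2, w0, wsupp, wnn, w1L, w1R⟩ := exists_bump hd
  have cw : Continuous w := continuous_iff_continuousAt.2 fun x => (dw x).continuousAt
  have cw1 : Continuous w1 := continuous_iff_continuousAt.2 fun x => (dw1 x).continuousAt
  have wm : w (-m) = 0 ∧ w1 (-m) = 0 := wsupp _ (by rw [abs_neg, abs_of_pos hm]; exact hdm)
  have wl : w l = 0 ∧ w1 l = 0 := wsupp _ (by rw [abs_of_pos hl]; exact hdl)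
  have ftc : ∀ x y : ℝ, ∫ t in x..y, w t * w1 t = (w y ^ 2 - w x ^ 2) / 2 := by
    intro x y
    have : ∀ t ∈ uIcc x y, HasDerivAt (fun t => w t ^ 2 / 2) (w t * w1 t) t := by
      intro t _
      have := ((dw t).pow 2).div_const 2
      refine HasDerivAt.congr_deriv this ?_
      simp
      ring
    rw [intervalIntegral.integral_eq_sub_of_hasDerivAt this
      ((cw.mul cw1).intervalIntegrable _ _)]
    ring
  -- the gravity integral
  have pcP : PiecewiseCont m l (fun x => ρ0 x * (w x * w1 x)) :=
    pρ.pc.mul (pc_of_cont (cw.mul cw1))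
  have hP : pwInt m l (fun x => ρ0 x * (w x * w1 x)) ≤ -(ρ0 0 - ρ0minus) / 2 + η := by
    have hL : ∫ x in (-m)..0, ρ0 x * (w x * w1 x) ≤
        ∫ x in (-m)..0, (ρ0minus + η) * (w x * w1 x) := by
      apply intervalIntegral.integral_mono_on_of_le_Ioo (by linarith) (pcP.intL hm)
      · exact (continuous_const.mul (cw.mul cw1)).intervalIntegrable _ _
      · intro x hx
        by_cases h : -d < x
        · exact mul_le_mul_of_nonneg_right (hleft x h hx.2)
            (mul_nonneg (wnn x) (w1L x hx.2.le))
        · have := wsupp x (by rw [abs_of_neg hx.2]; linarith)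
          simp [this.1]
    have hR : ∫ x in (0:ℝ)..l, ρ0 x * (w x * w1 x) ≤
        ∫ x in (0:ℝ)..l, (ρ0 0 - η) * (w x * w1 x) := by
      apply intervalIntegral.integral_mono_on hl.le (pcP.intR hl)
      · exact (continuous_const.mul (cw.mul cw1)).intervalIntegrable _ _
      · intro x hx
        by_cases h : x < d
        · exact mul_le_mul_of_nonpos_right (hright x hx.1 h)
            (mul_nonpos_of_nonneg_of_nonpos (wnn x) (w1R x hx.1))
        · have := wsupp x (by rw [abs_of_nonneg hx.1]; linarith)
          simp [this.1]
    rw [intervalIntegral.integral_const_mul, ftc, w0, wm.1] at hL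
    rw [intervalIntegral.integral_const_mul, ftc, w0, wl.1] at hR
    unfold pwInt
    linarith
  -- constants
  set Jmin : ℝ := (1 / 2) * pwInt m l (fun x => ρ0 x * (w x ^ 2)) with hJmin
  set Jmax : ℝ := (1 / 2) * pwInt m l (fun x => ρ0 x * (w1 x ^ 2 / a + w x ^ 2)) with hJmax
  set B : ℝ := (1 / 2) * pwInt m l (fun x => ε0 x * (2 * w2 x ^ 2 / a + 2 * b * w x ^ 2
    + 4 * w1 x ^ 2)) with hB
  have hbpos : 0 < b := ha.trans hab
  have hJminpos : 0 < Jmin := by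
    have hL : 0 ≤ ∫ x in (-m)..0, ρ0 x * (w x ^ 2) := by
      apply intervalIntegral.integral_nonneg (by linarith)
      intro x hx
      have := hρ x ⟨hx.1, by linarith [hx.2]⟩
      positivity
    have hR : 0 < ∫ x in (0:ℝ)..l, ρ0 x * (w x ^ 2) := by
      apply intervalIntegral.integral_pos hl
      · exact pρ.2.mul (cw.pow 2).continuousOn
      · intro x hx
        have := hρ x ⟨by linarith [hx.1], hx.2⟩
        positivity
      · refine ⟨0, ⟨le_rfl, hl.le⟩, ?_⟩
        have := hρ 0 ⟨by linarith, hl.le⟩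
        rw [w0]
        positivity
    rw [hJmin]
    unfold pwInt
    linarith
  have hBnn : 0 ≤ B := by
    refine mul_nonneg (by norm_num) (pwInt_nonneg hm hl fun x hx => ?_)
    have := hε x hx
    positivity
  have hJle : Jmin ≤ Jmax := by
    refine mul_le_mul_of_nonneg_left (pwInt_mono hm hl
      (pρ.pc.mul (pc_of_cont (by fun_prop))) (pρ.pc.mul (pc_of_cont (by fun_prop)))
      fun x hx => ?_) (by norm_num)
    have := hρ x hx
    apply mul_le_mul_of_nonneg_left _ this.le
    have : 0 ≤ w1 x ^ 2 / a := by positivity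
    linarith
  have hJmaxpos : 0 < Jmax := hJminpos.trans_le hJle
  refine ⟨D / 4 / Jmax, by positivity, B / Jmin + 1, by positivity, ?_⟩
  intro k s hk hs hka hkb
  have hk0 : k ≠ 0 := hk.ne'
  set J : ℝ := (1 / 2) * pwInt m l (fun x => ρ0 x * (w1 x ^ 2 / k ^ 2 + w x ^ 2)) with hJ
  have hJ1 : Jmin ≤ J := by
    refine mul_le_mul_of_nonneg_left (pwInt_mono hm hl
      (pρ.pc.mul (pc_of_cont (by fun_prop))) (pρ.pc.mul (pc_of_cont (by fun_prop)))
      fun x hx => ?_) (by norm_num)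
    have := hρ x hx
    apply mul_le_mul_of_nonneg_left _ this.le
    have : 0 ≤ w1 x ^ 2 / k ^ 2 := by positivity
    linarith
  have hJ2 : J ≤ Jmax := by
    refine mul_le_mul_of_nonneg_left (pwInt_mono hm hl
      (pρ.pc.mul (pc_of_cont (by fun_prop))) (pρ.pc.mul (pc_of_cont (by fun_prop)))
      fun x hx => ?_) (by norm_num)
    have := hρ x hx
    apply mul_le_mul_of_nonneg_left _ this.le
    have : w1 x ^ 2 / k ^ 2 ≤ w1 x ^ 2 / a :=
      div_le_div_of_nonneg_left (by positivity) ha hka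
    linarith
  have hJpos : 0 < J := hJminpos.trans_le hJ1
  obtain ⟨c, hc⟩ : ∃ c : ℝ, c ^ 2 = 1 / J := ⟨Real.sqrt (1 / J), Real.sq_sqrt (by positivity)⟩
  set Bk : ℝ := (1 / 2) * pwInt m l (fun x => ε0 x * ((w2 x / k + k * w x) ^ 2
    + 4 * w1 x ^ 2)) with hBk
  have hBkB : Bk ≤ B := by
    refine mul_le_mul_of_nonneg_left (pwInt_mono hm hl
      (pε.pc.mul (pc_of_cont (by fun_prop))) (pε.pc.mul (pc_of_cont (by fun_prop)))
      fun x hx => ?_) (by norm_num)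
    have := hε x hx
    apply mul_le_mul_of_nonneg_left _ this.le
    have h1 : (w2 x / k) ^ 2 ≤ w2 x ^ 2 / a := by
      rw [div_pow]
      exact div_le_div_of_nonneg_left (by positivity) ha hka
    have h2 : (k * w x) ^ 2 ≤ b * w x ^ 2 := by
      rw [mul_pow]
      exact mul_le_mul_of_nonneg_right hkb (by positivity)
    have h3 : 2 * w2 x ^ 2 / a = 2 * (w2 x ^ 2 / a) := by ring
    rw [h3]
    nlinarith [sq_nonneg (w2 x / k - k * w x)]
  have hE : energyE m l g σ k ρ0 p ε0 δ0 (fun x => c * (-(w1 x) / k)) (fun x => c * w x)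
      (fun x => c * (-(w2 x) / k)) (fun x => c * w1 x) s =
      (1 / J) * (σ * k ^ 2 / 2 + g * pwInt m l (fun x => ρ0 x * (w x * w1 x)) + s * Bk) := by
    unfold energyE
    have i1 : (fun x => (s * δ0 x + p x * ρ0 x) * (c * w1 x + k * (c * (-(w1 x) / k))) ^ 2
        - 2 * g * ρ0 x * k * (c * (-(w1 x) / k)) * (c * w x)) =
        fun x => (c ^ 2 * (2 * g)) * (ρ0 x * (w x * w1 x)) := by
      funext x
      field_simp
      ring
    have i2 : (fun x => ε0 x * ((c * (-(w2 x) / k) - k * (c * w x)) ^ 2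
        + (c * w1 x - k * (c * (-(w1 x) / k))) ^ 2
        + (1 / 3) * (c * w1 x + k * (c * (-(w1 x) / k))) ^ 2)) =
        fun x => c ^ 2 * (ε0 x * ((w2 x / k + k * w x) ^ 2 + 4 * w1 x ^ 2)) := by
      funext x
      field_simp
      ring
    rw [i1, i2, pwInt_const_mul, pwInt_const_mul, ← hc, hBk]
    simp only [w0]
    ring
  have hmem : energyE m l g σ k ρ0 p ε0 δ0 (fun x => c * (-(w1 x) / k)) (fun x => c * w x)
      (fun x => c * (-(w2 x) / k)) (fun x => c * w1 x) s ∈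
      { e : ℝ | ∃ φ ψ φd ψd : ℝ → ℝ, Admissible m l φ ψ φd ψd ∧
        energyJ m l ρ0 φ ψ = 1 ∧ e = energyE m l g σ k ρ0 p ε0 δ0 φ ψ φd ψd s } := by
    refine ⟨_, _, _, _, ⟨⟨?_, ?_, ?_, ?_⟩, ⟨?_, ?_, ?_, ?_⟩, ?_, ?_, ?_, ?_⟩, ?_, rfl⟩
    · exact Continuous.continuousOn (by fun_prop)
    · exact fun x _ => (((dw1 x).neg.div_const k).const_mul c).hasDerivWithinAt
    · exact fun x _ => (((dw1 x).neg.div_const k).const_mul c).hasDerivWithinAt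
    · exact pc_of_cont (by fun_prop)
    · exact Continuous.continuousOn (by fun_prop)
    · exact fun x _ => ((dw x).const_mul c).hasDerivWithinAt
    · exact fun x _ => ((dw x).const_mul c).hasDerivWithinAt
    · exact pc_of_cont (by fun_prop)
    · simp [wm.2]
    · simp [wl.2]
    · simp [wm.1]
    · simp [wl.1]
    · unfold energyJ
      have i1 : (fun x => ρ0 x * ((c * (-(w1 x) / k)) ^ 2 + (c * w x) ^ 2)) =
          fun x => c ^ 2 * (ρ0 x * (w1 x ^ 2 / k ^ 2 + w x ^ 2)) := by
        funext x
        field_simp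
      rw [i1, pwInt_const_mul, hc]
      have : (1 / 2) * (1 / J * pwInt m l (fun x => ρ0 x * (w1 x ^ 2 / k ^ 2 + w x ^ 2)))
          = (1 / J) * J := by rw [hJ]; ring
      rw [this]
      field_simp
  have hle : muInf m l g σ k ρ0 p ε0 δ0 s ≤ _ :=
    csInf_le (muInf_bddBelow m l g σ k s ρ0 p ε0 δ0 hm hl hg hσ hk hs hprof') hmem
  rw [hE] at hle
  refine hle.trans ?_
  have hA : σ * k ^ 2 / 2 + g * pwInt m l (fun x => ρ0 x * (w x * w1 x)) ≤ -(D / 4) := by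
    have h1 := mul_le_mul_of_nonneg_left hP hg.le
    have h2 := mul_le_mul_of_nonneg_left hkb hσ.le
    have h3 : g * η = D / 4 := by rw [hη]; field_simp
    have h4 : g * (-(ρ0 0 - ρ0minus) / 2 + η) = -(g * (ρ0 0 - ρ0minus)) / 2 + g * η := by ring
    linarith
  have hiJ : 0 < 1 / J := by positivity
  have s1 : (1 / J) * (σ * k ^ 2 / 2 + g * pwInt m l (fun x => ρ0 x * (w x * w1 x)) + s * Bk)
      ≤ (1 / J) * (-(D / 4) + s * B) := by
    apply mul_le_mul_of_nonneg_left _ hiJ.le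
    have := mul_le_mul_of_nonneg_left hBkB hs.le
    linarith
  have s2 : D / 4 / Jmax ≤ D / 4 / J := div_le_div_of_nonneg_left (by positivity) hJpos hJ2
  have s3 : B / J ≤ B / Jmin := div_le_div_of_nonneg_left hBnn hJminpos hJ1
  have s4 := mul_le_mul_of_nonneg_left s3 hs.le
  have s5 : (1 / J) * (-(D / 4) + s * B) = -(D / 4 / J) + s * (B / J) := by ring
  have s6 : s * (B / Jmin + 1) = s * (B / Jmin) + s := by ring
  linarith

end RT
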